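/- arXiv:1810.01315 — 3 statements merged into one kernel-verified Lean document; each statement's English description precedes it below -/
import Mathlib

section
/- For every homeomorphism 𝔞 : 𝔸 → 𝔸 of the Alexandroff square and every s ∈ I, there exists t ∈ I such that 𝔞({s} × I) = {t} × I and 𝔞({(s,0), (s,1)}) = {(t,0), (t,1)}. -/
open Set

/-- The unit interval `[0,1]` with its Euclidean (subspace) topology. -/
local notation "𝕀" => unitInterval

/-- The generating family for the Alexandroff square topology on `[0,1] × [0,1]`:
sets `{x} × U` with `U` open in `𝕀` and `x ∉ U`, together with sets
`([0,1] × U) \ (F × [0,1])` with `U` open in `𝕀` and `F` finite. -/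
def alexBasis : Set (Set (𝕀 × 𝕀)) :=
  {S | (∃ (x : 𝕀) (U : Set 𝕀), IsOpen U ∧ x ∉ U ∧ S = ({x} : Set 𝕀) ×ˢ U) ∨
       (∃ (U F : Set 𝕀), IsOpen U ∧ F.Finite ∧ S = ((univ : Set 𝕀) ×ˢ U) \ (F ×ˢ (univ : Set 𝕀)))}

/-- The Alexandroff square topology. -/
def alexTop : TopologicalSpace (𝕀 × 𝕀) := TopologicalSpace.generateFrom alexBasis

/-!
The points of the diagonal are exactly the points of the Alexandroff square without arbitrarily
small connected neighborhoods: such a neighborhood of `(x, x)` meets `{z} × I` for all but finitely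
many `z`, and a connected set that meets `{z} × I` but omits `(z, z)` stays inside `{z} × I`. Hence
a homeomorphism `a` preserves the diagonal, say `a (s, s) = (t, t)`. The image of `{s} × I` is
connected and meets the diagonal only in `(t, t)`, so it cannot meet any other fiber. Thus `a`
restricts to a homeomorphism of intervals `{s} × I → {t} × I`, which is monotone or antitone and so
permutes the endpoints.
-/

open Filter Topology

section ConnectedImKleinen

variable {X Y : Type*} [TopologicalSpace X] [TopologicalSpace Y]

/-- Connectedness im kleinen: `x` has arbitrarily small connected neighborhoods, which need not be
open. This is the topological property that singles out the off-diagonal points of the Alexandroff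
square. -/
def IsConnectedImKleinenAt (x : X) : Prop :=
  ∀ V ∈ 𝓝 x, ∃ C ∈ 𝓝 x, IsPreconnected C ∧ C ⊆ V

theorem isConnectedImKleinenAt [LocallyConnectedSpace X] (x : X) : IsConnectedImKleinenAt x :=
  locallyConnectedSpace_iff_connected_subsets.1 inferInstance x

theorem IsConnectedImKleinenAt.of_map_nhds_eq {f : X → Y} {x : X} (hx : IsConnectedImKleinenAt x)
    (hf : Continuous f) (hmap : map f (𝓝 x) = 𝓝 (f x)) : IsConnectedImKleinenAt (f x) := by
  intro V hV
  obtain ⟨C, hCx, hC, hCV⟩ := hx (f ⁻¹' V) (hf.continuousAt hV)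
  exact ⟨f '' C, hmap ▸ image_mem_map hCx, hC.image f hf.continuousOn, image_subset_iff.2 hCV⟩

theorem isConnectedImKleinenAt_homeomorph_apply (h : X ≃ₜ Y) (x : X) :
    IsConnectedImKleinenAt (h x) ↔ IsConnectedImKleinenAt x := by
  refine ⟨fun hx => ?_, fun hx => hx.of_map_nhds_eq h.continuous (h.map_nhds_eq x)⟩
  simpa only [h.symm_apply_apply] using
    hx.of_map_nhds_eq h.symm.continuous (h.symm.map_nhds_eq (h x))

end ConnectedImKleinen

section LinearOrder

variable {X : Type*} [TopologicalSpace X]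

theorem locallyConnectedSpace_of_denselyOrdered [ConditionallyCompleteLinearOrder X]
    [OrderTopology X] [DenselyOrdered X] : LocallyConnectedSpace X :=
  locallyConnectedSpace_iff_connected_subsets.2 fun x V hV =>
    ⟨ordConnectedComponent V x, ordConnectedComponent_mem_nhds.2 hV,
      OrdConnected.isPreconnected inferInstance, ordConnectedComponent_subset⟩

theorem homeomorph_image_bot_top [CompleteLinearOrder X] [OrderTopology X] [DenselyOrdered X]
    (g : X ≃ₜ X) : g '' {⊥, ⊤} = {⊥, ⊤} := by
  rw [image_pair]
  rcases g.continuous.strictMono_of_inj g.injective with hmono | hanti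
  · let e : X ≃o X := hmono.orderIsoOfSurjective g g.surjective
    rw [show g ⊥ = ⊥ from e.map_bot, show g ⊤ = ⊤ from e.map_top]
  · let e : X ≃o Xᵒᵈ := StrictMono.orderIsoOfSurjective (β := Xᵒᵈ) g hanti g.surjective
    rw [show g ⊥ = ⊤ from e.map_bot, show g ⊤ = ⊥ from e.map_top, pair_comm]

end LinearOrder

/-- The Alexandroff square over a topological space `X`, whose topology is defined as in the case
`X = [0,1]`. It is a type synonym of `X × X`, so that it does not carry the product topology;
`AlexandroffSquare unitInterval` is definitionally `[0,1] × [0,1]` with the topology `alexTop`. -/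
def AlexandroffSquare (X : Type*) : Type _ := X × X

namespace AlexandroffSquare

variable {X : Type*}

/-- The point `(x, y)` of the Alexandroff square. -/
def mk (x y : X) : AlexandroffSquare X := (x, y)

/-- The first coordinate of a point of the Alexandroff square. -/
def fst (p : AlexandroffSquare X) : X := Prod.fst p

/-- The second coordinate of a point of the Alexandroff square. -/
def snd (p : AlexandroffSquare X) : X := Prod.snd p

/-- The vertical fiber `{x} × X`. -/
def fiber (x : X) : Set (AlexandroffSquare X) := ({x} : Set X) ×ˢ (univ : Set X)

@[simp] theorem fst_mk (x y : X) : (mk x y).fst = x := rfl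

@[simp] theorem snd_mk (x y : X) : (mk x y).snd = y := rfl

@[simp] theorem mk_fst_snd (p : AlexandroffSquare X) : mk p.fst p.snd = p := rfl

@[simp] theorem mem_fiber {x : X} {p : AlexandroffSquare X} : p ∈ fiber x ↔ p.fst = x :=
  and_iff_left trivial

theorem eq_mk_of_mem_fiber {x y : X} {p : AlexandroffSquare X} (hp : p ∈ fiber x)
    (hsnd : p.snd = y) : p = mk x y :=
  congrArg₂ mk (mem_fiber.1 hp) hsnd

theorem range_mk (x : X) : range (mk x) = fiber x :=
  Subset.antisymm (range_subset_iff.2 fun y => mem_fiber.2 (fst_mk x y))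
    fun p hp => ⟨p.snd, (eq_mk_of_mem_fiber hp rfl).symm⟩

variable [TopologicalSpace X]

instance : TopologicalSpace (AlexandroffSquare X) :=
  TopologicalSpace.generateFrom
    {S : Set (X × X) | (∃ (x : X) (U : Set X), IsOpen U ∧ x ∉ U ∧ S = ({x} : Set X) ×ˢ U) ∨
      (∃ (U F : Set X), IsOpen U ∧ F.Finite ∧
        S = ((univ : Set X) ×ˢ U) \ (F ×ˢ (univ : Set X)))}

theorem isOpen_fiber_inter_snd_preimage {x : X} {U : Set X} (hU : IsOpen U) (hx : x ∉ U) :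
    IsOpen (fiber x ∩ snd ⁻¹' U) := by
  refine TopologicalSpace.isOpen_generateFrom_of_mem (Or.inl ⟨x, U, hU, hx, ?_⟩)
  ext p
  exact and_congr_left' mem_fiber

theorem isOpen_snd_preimage_diff_fst_preimage {U F : Set X} (hU : IsOpen U) (hF : F.Finite) :
    IsOpen (snd ⁻¹' U \ fst ⁻¹' F) := by
  refine TopologicalSpace.isOpen_generateFrom_of_mem (Or.inr ⟨U, F, hU, hF, ?_⟩)
  ext p
  exact and_congr (and_iff_right trivial).symm (not_congr (and_iff_left trivial).symm)

theorem continuous_snd : Continuous (snd : AlexandroffSquare X → X) :=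
  continuous_def.2 fun U hU => by
    simpa only [preimage_empty, sdiff_empty] using
      isOpen_snd_preimage_diff_fst_preimage hU finite_empty

theorem isClosed_fiber (x : X) : IsClosed (fiber x) := by
  have hopen : IsOpen (snd ⁻¹' univ \ fst ⁻¹' {x} : Set (AlexandroffSquare X)) :=
    isOpen_snd_preimage_diff_fst_preimage isOpen_univ (finite_singleton x)
  refine isOpen_compl_iff.1 ?_
  convert hopen using 1
  ext p
  simp

theorem continuous_mk (x : X) : Continuous (mk x) := by
  refine continuous_generateFrom_iff.2 ?_
  rintro S (⟨x', U, hU, -, rfl⟩ | ⟨U, F, hU, -, rfl⟩)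
  · exact (isOpen_const (p := x = x')).and hU
  · exact ((isOpen_const (p := True)).and hU).and (isOpen_const (p := ¬(x ∈ F ∧ True)))

theorem isPreconnected_fiber [PreconnectedSpace X] (x : X) : IsPreconnected (fiber x) :=
  range_mk x ▸ isPreconnected_range (continuous_mk x)

theorem map_mk_nhds [T1Space X] {x y : X} (hxy : x ≠ y) : map (mk x) (𝓝 y) = 𝓝 (mk x y) := by
  refine le_antisymm (continuous_mk x).continuousAt fun V hV => ?_
  obtain ⟨U, hUV, hU, hyU⟩ := mem_nhds_iff.1 (mem_map.1 hV)
  have hopen : IsOpen (fiber x ∩ snd ⁻¹' (U \ {x})) :=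
    isOpen_fiber_inter_snd_preimage (hU.sdiff isClosed_singleton) (by simp)
  filter_upwards [hopen.mem_nhds ⟨mem_fiber.2 rfl, hyU, hxy.symm⟩]
  rintro p ⟨hp, hpU, -⟩
  obtain rfl := mem_fiber.1 hp
  exact hUV hpU

theorem tendsto_mk_cofinite_nhds_diag (x : X) :
    Tendsto (fun z => mk z x) cofinite (𝓝 (mk x x)) := by
  refine TopologicalSpace.tendsto_nhds_generateFrom_iff.2 ?_
  rintro S (⟨x', U, -, hxU, rfl⟩ | ⟨U, F, -, hF, rfl⟩) hmem
  · obtain ⟨rfl, hU⟩ := hmem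
    exact absurd hU hxU
  · filter_upwards [hF.compl_mem_cofinite] with z hz
    exact ⟨hmem.1, fun hzF => hz hzF.1⟩

theorem subset_fiber_of_isPreconnected [T1Space X] {C : Set (AlexandroffSquare X)} {x : X}
    (hC : IsPreconnected C) (hdiag : mk x x ∉ C) (hne : (C ∩ fiber x).Nonempty) :
    C ⊆ fiber x := by
  have hopen : IsOpen (fiber x ∩ snd ⁻¹' {x}ᶜ) :=
    isOpen_fiber_inter_snd_preimage isOpen_compl_singleton (by simp)
  have hcover : C ⊆ fiber x ∩ snd ⁻¹' {x}ᶜ ∪ (fiber x)ᶜ := by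
    intro p hp
    by_cases hpx : p ∈ fiber x
    · exact Or.inl ⟨hpx, fun hsnd => hdiag (eq_mk_of_mem_fiber hpx hsnd ▸ hp)⟩
    · exact Or.inr hpx
  have hmeet : (C ∩ (fiber x ∩ snd ⁻¹' {x}ᶜ)).Nonempty := by
    obtain ⟨p, hpC, hpx⟩ := hne
    exact ⟨p, hpC, (hcover hpC).resolve_right (not_not_intro hpx)⟩
  exact (hC.subset_left_of_subset_union hopen (isClosed_fiber x).isOpen_compl
    (disjoint_compl_right.mono_left inter_subset_left) hcover hmeet).trans inter_subset_left

theorem isConnectedImKleinenAt_mk [T1Space X] [LocallyConnectedSpace X] {x y : X} (hxy : x ≠ y) :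
    IsConnectedImKleinenAt (mk x y) :=
  (isConnectedImKleinenAt y).of_map_nhds_eq (continuous_mk x) (map_mk_nhds hxy)

theorem not_isConnectedImKleinenAt_mk_self [T2Space X] [ConnectedSpace X] [Nontrivial X] (x : X) :
    ¬ IsConnectedImKleinenAt (mk x x) := by
  intro hx
  obtain ⟨w, hwx⟩ := exists_ne x
  obtain ⟨W, U, hW, hU, hwW, hxU, hWU⟩ := t2_separation hwx
  obtain ⟨C, hCx, hC, hCU⟩ := hx (snd ⁻¹' U) ((hU.preimage continuous_snd).mem_nhds hxU)
  have hcofinite : {z | mk z x ∉ C}.Finite := tendsto_mk_cofinite_nhds_diag x hCx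
  obtain ⟨z, hzW, hzC⟩ : ∃ z ∈ W, mk z x ∈ C := by
    simpa using (infinite_of_mem_nhds w (hW.mem_nhds hwW)).exists_notMem_finite hcofinite
  have hzU : z ∉ U := disjoint_left.1 hWU hzW
  have hCz : C ⊆ fiber z :=
    subset_fiber_of_isPreconnected hC (fun hz => hzU (hCU hz)) ⟨mk z x, hzC, mem_fiber.2 rfl⟩
  obtain rfl : x = z := mem_fiber.1 (hCz (mem_of_mem_nhds hCx))
  exact hzU hxU

theorem isConnectedImKleinenAt_iff [T2Space X] [ConnectedSpace X] [LocallyConnectedSpace X]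
    [Nontrivial X] {p : AlexandroffSquare X} : IsConnectedImKleinenAt p ↔ p.fst ≠ p.snd := by
  refine ⟨?_, isConnectedImKleinenAt_mk⟩
  intro hp hdiag
  refine not_isConnectedImKleinenAt_mk_self p.fst ?_
  rwa [← mk_fst_snd p, ← hdiag] at hp

section Homeomorph

variable [T2Space X] [ConnectedSpace X] [LocallyConnectedSpace X]
  (a : AlexandroffSquare X ≃ₜ AlexandroffSquare X)

theorem fst_homeomorph_apply_eq_snd_iff (p : AlexandroffSquare X) :
    (a p).fst = (a p).snd ↔ p.fst = p.snd := by
  cases subsingleton_or_nontrivial X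
  · simp only [eq_iff_true_of_subsingleton]
  · rw [← not_iff_not, ← ne_eq, ← ne_eq, ← isConnectedImKleinenAt_iff,
      ← isConnectedImKleinenAt_iff, isConnectedImKleinenAt_homeomorph_apply]

theorem exists_homeomorph_apply_mk_self (s : X) : ∃ t, a (mk s s) = mk t t := by
  have hdiag : (a (mk s s)).fst = (a (mk s s)).snd :=
    (fst_homeomorph_apply_eq_snd_iff a (mk s s)).2 rfl
  exact ⟨(a (mk s s)).fst, congrArg (mk _) hdiag.symm⟩

variable {a}

theorem mapsTo_fiber {s t : X} (hst : a (mk s s) = mk t t) : MapsTo a (fiber s) (fiber t) := by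
  intro p hp
  by_contra hpt
  have hdiag : mk (a p).fst (a p).fst ∉ a '' fiber s := by
    rintro ⟨q, hq, hqp⟩
    have hqdiag : q.fst = q.snd :=
      (fst_homeomorph_apply_eq_snd_iff a q).1 (by simp only [hqp, fst_mk, snd_mk])
    have hqs : q = mk s s := eq_mk_of_mem_fiber hq (hqdiag.symm.trans (mem_fiber.1 hq))
    rw [hqs, hst] at hqp
    exact hpt (mem_fiber.2 (congrArg fst hqp).symm)
  have hsub : a '' fiber s ⊆ fiber (a p).fst :=
    subset_fiber_of_isPreconnected ((isPreconnected_fiber s).image a a.continuous.continuousOn)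
      hdiag ⟨a p, mem_image_of_mem a hp, mem_fiber.2 rfl⟩
  have ht : mk t t ∈ fiber (a p).fst := hsub ⟨mk s s, mem_fiber.2 rfl, hst⟩
  exact hpt (mem_fiber.2 (mem_fiber.1 ht).symm)

theorem mk_snd_apply_mk {s t : X} (hst : a (mk s s) = mk t t) (y : X) :
    mk t (a (mk s y)).snd = a (mk s y) :=
  (eq_mk_of_mem_fiber (mapsTo_fiber hst (mem_fiber.2 (fst_mk s y))) rfl).symm

variable (a)

theorem exists_homeomorph_apply_mk (s : X) :
    ∃ (t : X) (g : X ≃ₜ X), ∀ y, a (mk s y) = mk t (g y) := by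
  obtain ⟨t, hst⟩ := exists_homeomorph_apply_mk_self a s
  have hts : a.symm (mk t t) = mk s s := a.symm_apply_eq.2 hst.symm
  let g : X ≃ₜ X :=
    { toFun y := (a (mk s y)).snd
      invFun y := (a.symm (mk t y)).snd
      left_inv y := by simp only [mk_snd_apply_mk hst, a.symm_apply_apply, snd_mk]
      right_inv y := by simp only [mk_snd_apply_mk hts, a.apply_symm_apply, snd_mk]
      continuous_toFun := continuous_snd.comp (a.continuous.comp (continuous_mk s))
      continuous_invFun := continuous_snd.comp (a.symm.continuous.comp (continuous_mk t)) }
  exact ⟨t, g, fun y => (mk_snd_apply_mk hst y).symm⟩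

end Homeomorph

end AlexandroffSquare

open AlexandroffSquare in
theorem alexandroff_homeomorph_maps_fibers_to_fibers_general {X : Type*} [CompleteLinearOrder X]
    [DenselyOrdered X] [TopologicalSpace X] [OrderTopology X]
    (a : AlexandroffSquare X ≃ₜ AlexandroffSquare X) (s : X) :
    ∃ t : X, a '' fiber s = fiber t ∧ a '' {mk s ⊥, mk s ⊤} = {mk t ⊥, mk t ⊤} := by
  have : ConnectedSpace X := { toNonempty := ⟨s⟩ }
  have : LocallyConnectedSpace X := locallyConnectedSpace_of_denselyOrdered
  obtain ⟨t, g, hg⟩ := exists_homeomorph_apply_mk a s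
  have hcomp : a ∘ mk s = mk t ∘ g := funext hg
  refine ⟨t, ?_, ?_⟩
  · rw [← range_mk, ← range_comp, hcomp, g.surjective.range_comp, range_mk]
  · rw [← image_pair (mk s), ← image_comp, hcomp, image_comp, homeomorph_image_bot_top, image_pair]

/-- For every self-homeomorphism `𝔞` of the Alexandroff square and every `s ∈ [0,1]`
there is `t ∈ [0,1]` with `𝔞({s} × [0,1]) = {t} × [0,1]` and
`𝔞({(s,0),(s,1)}) = {(t,0),(t,1)}`. -/
theorem alexandroff_homeomorph_maps_fibers_to_fibers
    (𝔞 : @Homeomorph (𝕀 × 𝕀) (𝕀 × 𝕀) alexTop alexTop) (s : 𝕀) :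
    ∃ t : 𝕀, ⇑𝔞 '' (({s} : Set 𝕀) ×ˢ (univ : Set 𝕀)) = ({t} : Set 𝕀) ×ˢ (univ : Set 𝕀) ∧
      ⇑𝔞 '' {((s, 0) : 𝕀 × 𝕀), (s, 1)} = {((t, 0) : 𝕀 × 𝕀), (t, 1)} :=
  alexandroff_homeomorph_maps_fibers_to_fibers_general 𝔞 s
end

section
/- A map 𝔬 : 𝕆 → 𝕆 is an order-preserving homeomorphism of the lexicographically ordered square if and only if there exist an order-preserving homeomorphism θ : I → I and a family (μ_s)_{s ∈ I} of order-preserving homeomorphisms μ_s : I → I such that 𝔬(s,t) = (θ(s), μ_s(t)) for all (s,t) ∈ I × I. -/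
open Set

/-- The unit interval `[0,1]`. -/
local notation "𝕀" => unitInterval

/-- The lexicographic order on `[0,1] × [0,1]`:
`(x,y) ≤ (s,t)` iff `x < s`, or `x = s` and `y ≤ t`. -/
def lexLE (p q : 𝕀 × 𝕀) : Prop := p.1 < q.1 ∨ (p.1 = q.1 ∧ p.2 ≤ q.2)

/-- The strict lexicographic order on `[0,1] × [0,1]`. -/
def lexLT (p q : 𝕀 × 𝕀) : Prop := p.1 < q.1 ∨ (p.1 = q.1 ∧ p.2 < q.2)

/-- The order topology of the lexicographic order on `[0,1] × [0,1]`, generated by the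
open rays. -/
def lexTop : TopologicalSpace (𝕀 × 𝕀) :=
  TopologicalSpace.generateFrom
    ({S | ∃ a, S = {x | lexLT a x}} ∪ {S | ∃ a, S = {x | lexLT x a}})

/-!
For order topologies, an order-preserving homeomorphism is the same thing as an order isomorphism.
Let `e` be an order isomorphism between lexicographic products over bases whose intervals are
uncountable. If `e` sent two points with first coordinates `a < b` into one column, it would send
every column over `Ioo a b` into that same column, giving uncountably many pairwise disjoint
nondegenerate intervals in a second-countable linear order. Applied to `e` and to its inverse, this
shows that `e` permutes the columns, so it is given by one order isomorphism of the bases and one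
order isomorphism for each column.
-/

theorem exists_homeomorph_and_monotone_iff {X Y : Type*}
    [LinearOrder X] [TopologicalSpace X] [OrderTopology X]
    [PartialOrder Y] [TopologicalSpace Y] [OrderTopology Y] {f : X → Y} :
    ((∃ h : X ≃ₜ Y, ⇑h = f) ∧ Monotone f) ↔ ∃ e : X ≃o Y, ⇑e = f := by
  constructor
  · rintro ⟨⟨h, rfl⟩, hmono⟩
    exact ⟨(hmono.strictMono_of_injective h.injective).orderIsoOfSurjective h h.surjective, rfl⟩
  · rintro ⟨e, rfl⟩
    exact ⟨⟨e.toHomeomorph, rfl⟩, e.monotone⟩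

section LexProduct

variable {α β γ δ : Type*}

/-- The order isomorphism `(s, t) ↦ (θ s, μ s t)` of lexicographic products, the ordered analogue
of `Equiv.prodShear`. -/
def prodLexShear [PartialOrder α] [Preorder β] [Preorder γ] [Preorder δ]
    (θ : α ≃o γ) (μ : α → β ≃o δ) : α ×ₗ β ≃o γ ×ₗ δ where
  toEquiv := ofLex.trans <|
    (Equiv.prodShear θ.toEquiv fun s ↦ (μ s).toEquiv).trans toLex
  map_rel_iff' := by
    rintro ⟨s, t⟩ ⟨u, v⟩
    change toLex (θ s, μ s t) ≤ toLex (θ u, μ u v) ↔ toLex (s, t) ≤ toLex (u, v)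
    simp only [Prod.Lex.toLex_le_toLex, θ.lt_iff_lt, θ.injective.eq_iff]
    refine or_congr_right (and_congr_right fun hsu ↦ ?_)
    rw [hsu, (μ u).le_iff_le]

theorem snd_lt_snd_of_lt_of_fst_eq [Preorder α] [LT β] {p q : α ×ₗ β} (hpq : p < q)
    (hfst : (ofLex p).1 = (ofLex q).1) : (ofLex p).2 < (ofLex q).2 :=
  (Prod.Lex.lt_iff.1 hpq).elim (fun hlt ↦ absurd hfst hlt.ne) And.right

theorem countable_Ioo_fst_of_fst_apply_eq [LinearOrder α] [LinearOrder β] [Nontrivial β]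
    [PartialOrder γ] [LinearOrder δ] [TopologicalSpace δ] [OrderTopology δ]
    [SecondCountableTopology δ] {f : α ×ₗ β → γ ×ₗ δ} (hf : StrictMono f) {p q : α ×ₗ β}
    (hpq : (ofLex (f p)).1 = (ofLex (f q)).1) :
    (Ioo (ofLex p).1 (ofLex q).1).Countable := by
  obtain ⟨b₀, b₁, hb⟩ := exists_pair_lt β
  have fst_eq (s : α) (hs : s ∈ Ioo (ofLex p).1 (ofLex q).1) (t : β) :
      (ofLex (f (toLex (s, t)))).1 = (ofLex (f p)).1 := by
    have hp : p < toLex (s, t) := Prod.Lex.lt_iff.2 (.inl hs.1)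
    have hq : toLex (s, t) < q := Prod.Lex.lt_iff.2 (.inl hs.2)
    exact le_antisymm (hpq ▸ Prod.Lex.monotone_fst _ _ (hf hq).le)
      (Prod.Lex.monotone_fst _ _ (hf hp).le)
  let snd (s : α) (t : β) : δ := (ofLex (f (toLex (s, t)))).2
  have snd_lt_snd : ∀ s ∈ Ioo (ofLex p).1 (ofLex q).1, snd s b₀ < snd s b₁ := fun s hs ↦
    snd_lt_snd_of_lt_of_fst_eq (hf (Prod.Lex.toLex_lt_toLex.2 (.inr ⟨rfl, hb⟩)))
      ((fst_eq s hs b₀).trans (fst_eq s hs b₁).symm)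
  have snd_le_snd : ∀ s ∈ Ioo (ofLex p).1 (ofLex q).1, ∀ u ∈ Ioo (ofLex p).1 (ofLex q).1,
      s < u → snd s b₁ ≤ snd u b₀ := fun s hs u hu hsu ↦
    (snd_lt_snd_of_lt_of_fst_eq (hf (Prod.Lex.toLex_lt_toLex.2 (.inl hsu)))
      ((fst_eq s hs b₁).trans (fst_eq u hu b₀).symm)).le
  refine (countable_image_lt_image_Ioi_within (Ioo (ofLex p).1 (ofLex q).1) (snd · b₀)).mono ?_
  intro s hs
  exact ⟨hs, snd s b₁, snd_lt_snd s hs, snd_le_snd s hs⟩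

theorem fst_eq_of_fst_apply_eq [LinearOrder α] [LinearOrder β] [Nontrivial β]
    [PartialOrder γ] [LinearOrder δ] [TopologicalSpace δ] [OrderTopology δ]
    [SecondCountableTopology δ] (hα : ∀ a b : α, a < b → ¬ (Ioo a b).Countable)
    {f : α ×ₗ β → γ ×ₗ δ} (hf : StrictMono f) {p q : α ×ₗ β}
    (hpq : (ofLex (f p)).1 = (ofLex (f q)).1) : (ofLex p).1 = (ofLex q).1 := by
  rcases lt_trichotomy (ofLex p).1 (ofLex q).1 with hlt | heq | hgt
  · exact absurd (countable_Ioo_fst_of_fst_apply_eq hf hpq) (hα _ _ hlt)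
  · exact heq
  · exact absurd (countable_Ioo_fst_of_fst_apply_eq hf hpq.symm) (hα _ _ hgt)

theorem exists_base_orderIso [LinearOrder α] [Preorder β] [Nonempty β] [PartialOrder γ]
    [Preorder δ] [Nonempty δ] (e : α ×ₗ β ≃o γ ×ₗ δ)
    (he : ∀ p q, (ofLex (e p)).1 = (ofLex (e q)).1 ↔ (ofLex p).1 = (ofLex q).1) :
    ∃ θ : α ≃o γ, ∀ p, (ofLex (e p)).1 = θ (ofLex p).1 := by
  obtain ⟨b⟩ := ‹Nonempty β›
  obtain ⟨d⟩ := ‹Nonempty δ›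
  let base : α → γ := fun s ↦ (ofLex (e (toLex (s, b)))).1
  have base_fst (p : α ×ₗ β) : (ofLex (e p)).1 = base (ofLex p).1 := (he _ _).2 rfl
  have base_strictMono : StrictMono base := fun s u hsu ↦
    (Prod.Lex.monotone_fst _ _ (e.strictMono (Prod.Lex.toLex_lt_toLex.2 (.inl hsu))).le).lt_of_ne
      fun heq ↦ hsu.ne ((he _ _).1 heq)
  have base_surjective : Function.Surjective base := fun c ↦
    ⟨(ofLex (e.symm (toLex (c, d)))).1, by rw [← base_fst, e.apply_symm_apply, ofLex_toLex]⟩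
  exact ⟨base_strictMono.orderIsoOfSurjective base base_surjective, base_fst⟩

theorem exists_fiber_orderIso [Preorder α] [LinearOrder β] [Preorder γ] [Preorder δ]
    (e : α ×ₗ β ≃o γ ×ₗ δ) {θ : α → γ} (hθ_inj : Function.Injective θ)
    (hθ : ∀ p, (ofLex (e p)).1 = θ (ofLex p).1) (s : α) :
    ∃ μ : β ≃o δ, ∀ t, e (toLex (s, t)) = toLex (θ s, μ t) := by
  let fiber : β → δ := fun t ↦ (ofLex (e (toLex (s, t)))).2
  have apply_eq (t : β) : e (toLex (s, t)) = toLex (θ s, fiber t) :=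
    ofLex.injective (Prod.ext (hθ _) rfl)
  have fiber_strictMono : StrictMono fiber := fun t u htu ↦
    snd_lt_snd_of_lt_of_fst_eq (e.strictMono (Prod.Lex.toLex_lt_toLex.2 (.inr ⟨rfl, htu⟩)))
      ((hθ (toLex (s, t))).trans (hθ (toLex (s, u))).symm)
  have fiber_surjective : Function.Surjective fiber := fun d ↦ by
    obtain ⟨p, hp⟩ := e.surjective (toLex (θ s, d))
    obtain rfl : (ofLex p).1 = s := hθ_inj (by rw [← hθ, hp, ofLex_toLex])
    exact ⟨(ofLex p).2, congrArg (fun x ↦ (ofLex x).2) hp⟩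
  exact ⟨fiber_strictMono.orderIsoOfSurjective fiber fiber_surjective, apply_eq⟩

variable [LinearOrder α] [LinearOrder γ]
  [LinearOrder β] [Nontrivial β] [TopologicalSpace β] [OrderTopology β] [SecondCountableTopology β]
  [LinearOrder δ] [Nontrivial δ] [TopologicalSpace δ] [OrderTopology δ] [SecondCountableTopology δ]

theorem exists_orderIso_prodLex_iff
    (hα : ∀ a b : α, a < b → ¬ (Ioo a b).Countable)
    (hγ : ∀ a b : γ, a < b → ¬ (Ioo a b).Countable) (f : α ×ₗ β → γ ×ₗ δ) :
    (∃ e : α ×ₗ β ≃o γ ×ₗ δ, ⇑e = f) ↔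
      ∃ (θ : α ≃o γ) (μ : α → β ≃o δ), ∀ s t, f (toLex (s, t)) = toLex (θ s, μ s t) := by
  constructor
  · rintro ⟨e, rfl⟩
    have fst_apply_eq_iff (p q : α ×ₗ β) :
        (ofLex (e p)).1 = (ofLex (e q)).1 ↔ (ofLex p).1 = (ofLex q).1 :=
      ⟨fst_eq_of_fst_apply_eq hα e.strictMono, fun h ↦
        fst_eq_of_fst_apply_eq hγ e.symm.strictMono (by simpa only [e.symm_apply_apply] using h)⟩
    obtain ⟨θ, hθ⟩ := exists_base_orderIso e fst_apply_eq_iff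
    choose μ hμ using exists_fiber_orderIso e θ.injective hθ
    exact ⟨θ, μ, hμ⟩
  · rintro ⟨θ, μ, hf⟩
    exact ⟨prodLexShear θ μ, funext fun p ↦ (hf (ofLex p).1 (ofLex p).2).symm⟩

theorem lex_square_orderPreserving_homeomorph_iff_general
    [TopologicalSpace α] [OrderTopology α] [TopologicalSpace γ] [OrderTopology γ]
    [TopologicalSpace (α ×ₗ β)] [OrderTopology (α ×ₗ β)]
    [TopologicalSpace (γ ×ₗ δ)] [OrderTopology (γ ×ₗ δ)]
    (hα : ∀ a b : α, a < b → ¬ (Ioo a b).Countable)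
    (hγ : ∀ a b : γ, a < b → ¬ (Ioo a b).Countable) (f : α ×ₗ β → γ ×ₗ δ) :
    ((∃ 𝔬 : α ×ₗ β ≃ₜ γ ×ₗ δ, ⇑𝔬 = f) ∧ Monotone f) ↔
      ∃ (θ : α ≃ₜ γ) (μ : α → β ≃ₜ δ), Monotone θ ∧ (∀ s, Monotone (μ s)) ∧
        ∀ s t, f (toLex (s, t)) = toLex (θ s, μ s t) := by
  rw [exists_homeomorph_and_monotone_iff, exists_orderIso_prodLex_iff hα hγ]
  constructor
  · rintro ⟨θ, μ, hf⟩
    exact ⟨θ.toHomeomorph, fun s ↦ (μ s).toHomeomorph, θ.monotone, fun s ↦ (μ s).monotone, hf⟩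
  · rintro ⟨θ, μ, hθ, hμ, hf⟩
    obtain ⟨θ', hθ'⟩ := exists_homeomorph_and_monotone_iff.1 ⟨⟨θ, rfl⟩, hθ⟩
    choose μ' hμ' using fun s ↦ exists_homeomorph_and_monotone_iff.1 ⟨⟨μ s, rfl⟩, hμ s⟩
    exact ⟨θ', μ', by simpa only [hθ', hμ'] using hf⟩

end LexProduct

theorem not_countable_Ioo_of_ordConnected {s : Set ℝ} [s.OrdConnected] (a b : s) (hab : a < b) :
    ¬ (Ioo a b).Countable := fun hcount ↦ by
  have himage : Subtype.val '' Ioo a b = Ioo (a : ℝ) b := image_subtype_val_Ioo a b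
  exact (Cardinal.Real.Ioo_countable_iff.1 (himage ▸ hcount.image Subtype.val)).not_gt hab

theorem lexLE_iff_toLex_le {p q : 𝕀 × 𝕀} : lexLE p q ↔ toLex p ≤ toLex q :=
  Prod.Lex.toLex_le_toLex.symm

theorem lexLT_iff_toLex_lt {p q : 𝕀 × 𝕀} : lexLT p q ↔ toLex p < toLex q :=
  Prod.Lex.toLex_lt_toLex.symm

/-- `lexTop`, moved to the type synonym `𝕀 ×ₗ 𝕀` that carries Mathlib's lexicographic order. -/
instance lexSquareTopology : TopologicalSpace (𝕀 ×ₗ 𝕀) := lexTop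

instance orderTopology_lexSquare : OrderTopology (𝕀 ×ₗ 𝕀) := by
  refine ⟨congrArg TopologicalSpace.generateFrom ?_⟩
  ext S
  simp only [lexLT_iff_toLex_lt, mem_union, mem_ofPred_eq, ← exists_or]
  rfl

/-- `f` is an order-preserving self-homeomorphism of the lexicographically ordered
square iff there are an order-preserving homeomorphism `θ` of `[0,1]` (with its
Euclidean topology) and a family `μ` of order-preserving homeomorphisms of `[0,1]`
with `f (s,t) = (θ s, μ s t)`. -/
theorem lex_square_orderPreserving_homeomorph_iff (f : 𝕀 × 𝕀 → 𝕀 × 𝕀) :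
    ((∃ 𝔬 : @Homeomorph (𝕀 × 𝕀) (𝕀 × 𝕀) lexTop lexTop, ⇑𝔬 = f) ∧
      ∀ x y, lexLE x y → lexLE (f x) (f y)) ↔
    (∃ (θ : 𝕀 ≃ₜ 𝕀) (μ : 𝕀 → 𝕀 ≃ₜ 𝕀), Monotone ⇑θ ∧ (∀ s : 𝕀, Monotone ⇑(μ s)) ∧
      ∀ s t : 𝕀, f (s, t) = (θ s, μ s t)) := by
  simp only [lexLE_iff_toLex_le]
  exact lex_square_orderPreserving_homeomorph_iff_general
    not_countable_Ioo_of_ordConnected not_countable_Ioo_of_ordConnected f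
end

section
/- Let p, q : I → I be homeomorphisms of the unit interval. The product map p × q : 𝕆 → 𝕆, (s,t) ↦ (p(s), q(t)), is a homeomorphism of the lexicographically ordered square if and only if the composition p ∘ q : I → I is order preserving (equivalently, strictly increasing). -/
open Set

/-- The unit interval `[0,1]`. -/
local notation "𝕀" => unitInterval

/-!
A strictly monotone or strictly antitone surjection between linear orders is a homeomorphism for
the order topologies, and `p × q` is such a map when `p` and `q` have the same direction.
Conversely, every neighbourhood of `(m, ⊤)` in the lexicographic order contains all columns over
some interval `(m, b)`, so `(s, t) → (m, ⊤)` as `s ↓ m` for every fixed height `t`. If `p` is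
increasing, the images `(p s, q t)` lie above the whole column over `p m`, so continuity puts their
limit `(p m, q ⊤)` at the top of that column's image; thus `q ⊤` is the largest value of `q` and
`q` is increasing. If `p` is decreasing, `q ⊤` is the smallest value in the same way.
-/

section OrderTopology

variable {X Y : Type*} [LinearOrder X] [TopologicalSpace X] [OrderTopology X]
  [Preorder Y] [TopologicalSpace Y] [OrderTopology Y] {f : X → Y}

theorem isHomeomorph_of_strictMono_of_surjective (hf : StrictMono f)
    (hsurj : Function.Surjective f) : IsHomeomorph f :=
  (hf.orderIsoOfSurjective f hsurj).toHomeomorph.isHomeomorph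

theorem isHomeomorph_of_strictAnti_of_surjective (hf : StrictAnti f)
    (hsurj : Function.Surjective f) : IsHomeomorph f :=
  isHomeomorph_of_strictMono_of_surjective (Y := Yᵒᵈ) hf hsurj

end OrderTopology

/-- The product map `(s, t) ↦ (p s, q t)`, regarded as a map between lexicographic products. -/
def lexProdMap {α β γ δ : Type*} (p : α → γ) (q : β → δ) (x : α ×ₗ β) : γ ×ₗ δ :=
  toLex (Prod.map p q (ofLex x))

theorem surjective_lexProdMap {α β γ δ : Type*} {p : α → γ} {q : β → δ}
    (hp : Function.Surjective p) (hq : Function.Surjective q) :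
    Function.Surjective (lexProdMap p q) :=
  toLex.surjective.comp ((hp.prodMap hq).comp ofLex.surjective)

section Monotonicity

variable {α β γ δ : Type*} [Preorder α] [Preorder β] [Preorder γ] [Preorder δ]
  {p : α → γ} {q : β → δ}

theorem strictMono_lexProdMap (hp : StrictMono p) (hq : StrictMono q) :
    StrictMono (lexProdMap p q) := fun _ _ h =>
  Prod.Lex.toLex_lt_toLex.2 <|
    (Prod.Lex.lt_iff.1 h).imp (hp ·) fun h => ⟨congrArg p h.1, hq h.2⟩

theorem strictAnti_lexProdMap (hp : StrictAnti p) (hq : StrictAnti q) :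
    StrictAnti (lexProdMap p q) := fun _ _ h =>
  Prod.Lex.toLex_lt_toLex.2 <|
    (Prod.Lex.lt_iff.1 h).imp (hp ·) fun h => ⟨congrArg p h.1.symm, hq h.2⟩

end Monotonicity

section Continuity

open Filter Topology

variable {α β γ δ : Type*} [LinearOrder α] [TopologicalSpace α] [OrderTopology α]
  [Preorder β] [OrderTop β] [Preorder γ] [Preorder δ]
  [TopologicalSpace (α ×ₗ β)] [OrderTopology (α ×ₗ β)]

theorem tendsto_toLex_nhdsGT_nhds_top (m : α) (t : β) :
    Tendsto (fun s => toLex (s, t)) (𝓝[>] m) (𝓝 (toLex (m, ⊤))) := by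
  refine tendsto_order.2 ⟨fun a ha => ?_, fun a ha => ?_⟩
  · filter_upwards [self_mem_nhdsWithin] with s hs
    exact ha.trans (Prod.Lex.toLex_lt_toLex.2 (.inl hs))
  · have hma : m < (ofLex a).1 :=
      (Prod.Lex.lt_iff.1 ha).resolve_right fun h => not_top_lt h.2
    filter_upwards [Ioo_mem_nhdsGT hma] with s hs
    exact Prod.Lex.lt_iff.2 (.inl hs.2)

variable [DenselyOrdered α] [Nontrivial α]
  [TopologicalSpace (γ ×ₗ δ)] [OrderClosedTopology (γ ×ₗ δ)] {p : α → γ} {q : β → δ}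

theorem le_apply_top_of_continuous_lexProdMap (hp : StrictMono p)
    (hc : Continuous (lexProdMap p q)) (t : β) : q t ≤ q ⊤ := by
  obtain ⟨m, b, hmb⟩ := exists_pair_lt α
  have : (𝓝[>] m).NeBot := nhdsGT_neBot_of_exists_gt ⟨b, hmb⟩
  have hle : toLex (p m, q t) ≤ toLex (p m, q ⊤) :=
    ge_of_tendsto ((hc.tendsto _).comp (tendsto_toLex_nhdsGT_nhds_top m t)) <| by
      filter_upwards [self_mem_nhdsWithin] with s hs
      exact Prod.Lex.toLex_le_toLex.2 (.inl (hp hs))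
  simpa [Prod.Lex.toLex_le_toLex] using hle

theorem apply_top_le_of_continuous_lexProdMap (hp : StrictAnti p)
    (hc : Continuous (lexProdMap p q)) (t : β) : q ⊤ ≤ q t := by
  obtain ⟨m, b, hmb⟩ := exists_pair_lt α
  have : (𝓝[>] m).NeBot := nhdsGT_neBot_of_exists_gt ⟨b, hmb⟩
  have hle : toLex (p m, q ⊤) ≤ toLex (p m, q t) :=
    le_of_tendsto ((hc.tendsto _).comp (tendsto_toLex_nhdsGT_nhds_top m t)) <| by
      filter_upwards [self_mem_nhdsWithin] with s hs
      exact Prod.Lex.toLex_le_toLex.2 (.inl (hp hs))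
  simpa [Prod.Lex.toLex_le_toLex] using hle

end Continuity

section Homeomorph

variable {α β γ δ : Type*} [LinearOrder α] [DenselyOrdered α] [Nontrivial α]
  [TopologicalSpace α] [OrderTopology α]
  [ConditionallyCompleteLinearOrder β] [DenselyOrdered β] [BoundedOrder β]
  [TopologicalSpace β] [OrderTopology β]
  [LinearOrder γ] [LinearOrder δ] [TopologicalSpace δ] [OrderTopology δ]
  [TopologicalSpace (α ×ₗ β)] [OrderTopology (α ×ₗ β)]
  [TopologicalSpace (γ ×ₗ δ)] [OrderTopology (γ ×ₗ δ)]
  {p : α → γ}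

theorem isHomeomorph_lexProdMap_iff_strictMono (hp : StrictMono p)
    (hsurj : Function.Surjective p) (q : β ≃ₜ δ) :
    IsHomeomorph (lexProdMap p q) ↔ StrictMono q where
  mp h := q.continuous.strictMono_of_inj_boundedOrder
    (le_apply_top_of_continuous_lexProdMap hp h.continuous ⊥) q.injective
  mpr hq := isHomeomorph_of_strictMono_of_surjective (strictMono_lexProdMap hp hq)
    (surjective_lexProdMap hsurj q.surjective)

theorem isHomeomorph_lexProdMap_iff_strictAnti (hp : StrictAnti p)
    (hsurj : Function.Surjective p) (q : β ≃ₜ δ) :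
    IsHomeomorph (lexProdMap p q) ↔ StrictAnti q where
  mp h := q.continuous.strictAnti_of_inj_boundedOrder
    (apply_top_le_of_continuous_lexProdMap hp h.continuous ⊥) q.injective
  mpr hq := isHomeomorph_of_strictAnti_of_surjective (strictAnti_lexProdMap hp hq)
    (surjective_lexProdMap hsurj q.surjective)

end Homeomorph

theorem lex_square_prodMap_homeomorph_iff_general {α : Type*}
    [ConditionallyCompleteLinearOrder α] [DenselyOrdered α] [BoundedOrder α] [Nontrivial α]
    [TopologicalSpace α] [OrderTopology α] [TopologicalSpace (α ×ₗ α)] [OrderTopology (α ×ₗ α)]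
    (p q : α ≃ₜ α) :
    (∃ h : α ×ₗ α ≃ₜ α ×ₗ α, ⇑h = lexProdMap p q) ↔ StrictMono (⇑p ∘ ⇑q) := by
  rw [← isHomeomorph_iff_exists_homeomorph]
  rcases p.continuous.strictMono_of_inj p.injective with hp | hp
  · rw [isHomeomorph_lexProdMap_iff_strictMono hp p.surjective]
    simp only [StrictMono, Function.comp_apply, hp.lt_iff_lt]
  · rw [isHomeomorph_lexProdMap_iff_strictAnti hp p.surjective]
    simp only [StrictMono, StrictAnti, Function.comp_apply, hp.lt_iff_gt]

theorem orderTopology_lexTop : @OrderTopology (𝕀 ×ₗ 𝕀) lexTop _ := by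
  refine @OrderTopology.mk (𝕀 ×ₗ 𝕀) lexTop _
    (congrArg TopologicalSpace.generateFrom (Set.ext fun S => ?_))
  have setOf_lexLT_eq_Ioi (a : 𝕀 ×ₗ 𝕀) : {x | lexLT a x} = Ioi a :=
    Set.ext fun _ => Prod.Lex.lt_iff.symm
  have setOf_lexLT_eq_Iio (a : 𝕀 ×ₗ 𝕀) : {x | lexLT x a} = Iio a :=
    Set.ext fun _ => Prod.Lex.lt_iff.symm
  change ((∃ a : 𝕀 ×ₗ 𝕀, S = {x | lexLT a x}) ∨ ∃ a : 𝕀 ×ₗ 𝕀, S = {x | lexLT x a}) ↔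
    ∃ a : 𝕀 ×ₗ 𝕀, S = Ioi a ∨ S = Iio a
  simp only [setOf_lexLT_eq_Ioi, setOf_lexLT_eq_Iio, exists_or]

/-- For homeomorphisms `p q` of `[0,1]` (Euclidean topology), the product map
`(s,t) ↦ (p s, q t)` is a self-homeomorphism of the lexicographically ordered square
iff `p ∘ q` is order preserving (strictly increasing). -/
theorem lex_square_prodMap_homeomorph_iff (p q : 𝕀 ≃ₜ 𝕀) :
    (∃ 𝔥 : @Homeomorph (𝕀 × 𝕀) (𝕀 × 𝕀) lexTop lexTop,
        ⇑𝔥 = fun st : 𝕀 × 𝕀 => (p st.1, q st.2)) ↔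
      StrictMono (⇑p ∘ ⇑q) := by
  let : TopologicalSpace (𝕀 ×ₗ 𝕀) := lexTop
  have : OrderTopology (𝕀 ×ₗ 𝕀) := orderTopology_lexTop
  exact lex_square_prodMap_homeomorph_iff_general p q
end
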